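/- arXiv:1811.03496 — 2 statements merged into one kernel-verified Lean document; each statement's English description precedes it below -/
import Mathlib

section
/- Let N ≥ 1 and consider the affinity dynamics of a single task over N agents with a greedy (max-affinity) assignment sequence σ. Then every window of N consecutive cycles assigns the task to every agent exactly once: for every cycle t, the set {σ t, σ (t+1), …, σ (t+N−1)} equals the whole set of agents Fin N. -/
/-- Affinity dynamics of a single task over `N` agents with assignment
sequence `σ`: initially all affinities are 1; the assigned agent's affinity
is reset to 1, every other agent's affinity is incremented. -/
def affinity {N : ℕ} (σ : ℕ → Fin N) : ℕ → Fin N → ℕ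
  | 0, _ => 1
  | k + 1, i => if σ k = i then 1 else affinity σ k i + 1

/-- Affinity pressure of the task at cycle `k`. -/
def AP {N : ℕ} (σ : ℕ → Fin N) (k : ℕ) : ℚ :=
  (∑ i : Fin N, (affinity σ k i : ℚ)) / N - (N + 1) / 2

/-- `σ` is greedy (max-affinity): at every cycle the assigned agent has
maximal affinity. -/
def Greedy {N : ℕ} (σ : ℕ → Fin N) : Prop :=
  ∀ k i, affinity σ k i ≤ affinity σ k (σ k)

theorem aff_le {N : ℕ} (σ : ℕ → Fin N) (s d : ℕ) :
    affinity σ (s + d + 1) (σ s) ≤ d + 1 := by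
  induction d with
  | zero => simp [affinity]
  | succ d ih =>
    rw [show s + (d + 1) + 1 = (s + d + 1) + 1 by omega, affinity]
    split_ifs <;> omega

theorem aff_last {N : ℕ} (σ : ℕ → Fin N) (k : ℕ) (i : Fin N) :
    affinity σ k i = k + 1 ∨ ∃ j, j < k ∧ σ j = i ∧ j + affinity σ k i = k := by
  induction k with
  | zero => simp [affinity]
  | succ k ih =>
    rw [affinity]
    split_ifs with h
    · exact Or.inr ⟨k, by omega, h, rfl⟩
    · rcases ih with ih | ⟨j, hj, hs, he⟩
      · left; omega
      · exact Or.inr ⟨j, by omega, hs, by omega⟩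

theorem no_repeat {N : ℕ} (σ : ℕ → Fin N) (hσ : Greedy σ) (s d : ℕ)
    (hd : d + 1 < N) (h : σ (s + d + 1) = σ s) : False := by
  have h1 := aff_le σ s d
  have hsub : (Finset.univ : Finset (Fin N)) ⊆
      Finset.image σ (Finset.Ico s (s + d + 1)) := by
    intro i _
    have h2 := hσ (s + d + 1) i
    rw [h] at h2
    rcases aff_last σ (s + d + 1) i with h3 | ⟨j, hj, hs, he⟩
    · omega
    · exact Finset.mem_image.2 ⟨j, Finset.mem_Ico.2 ⟨by omega, hj⟩, hs⟩
  have h4 := (Finset.card_le_card hsub).trans Finset.card_image_le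
  simp at h4
  omega

theorem greedy_window_covers_all_agents {N : ℕ} (hN : 1 ≤ N) (σ : ℕ → Fin N)
    (hσ : Greedy σ) : ∀ t,
    Finset.image (fun d => σ (t + d)) (Finset.range N) = Finset.univ := by
  intro t
  apply Finset.eq_univ_of_card
  rw [Finset.card_image_of_injOn, Finset.card_range, Fintype.card_fin]
  have key : ∀ a b, a < b → b < N → σ (t + a) = σ (t + b) → False := by
    intro a b hab hb h
    apply no_repeat σ hσ (t + a) (b - a - 1) (by omega)
    rw [h]
    congr 1
    omega
  intro a ha b hb h
  simp only [Finset.coe_range, Set.mem_Iio] at ha hb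
  rcases lt_trichotomy a b with hl | hl | hl
  · exact (key a b hl hb h).elim
  · exact hl
  · exact (key b a hl ha h.symm).elim
end

section
/- Consider the affinity dynamics of a single task over N agents (N ≥ 1) with an arbitrary assignment sequence σ. For every cycle k, the affinity function is injective on agents that have been assigned at least once: if a k i = a k j and a k i ≤ k, then i = j. -/
theorem affinity_pos_aux {N : ℕ} (σ : ℕ → Fin N) (k : ℕ) (i : Fin N) :
    1 ≤ affinity σ k i := by
  cases k with
  | zero => simp [affinity]
  | succ k =>
    simp only [affinity]
    split_ifs <;> omega

theorem affinity_injective_on_assigned {N : ℕ} (hN : 1 ≤ N) (σ : ℕ → Fin N)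
    (k : ℕ) (i j : Fin N) (hij : affinity σ k i = affinity σ k j)
    (hk : affinity σ k i ≤ k) : i = j := by
  induction k with
  | zero => simp [affinity] at hk
  | succ k ih =>
    have h1 := affinity_pos_aux σ k i
    have h2 := affinity_pos_aux σ k j
    simp only [affinity] at hij hk
    split_ifs at hij hk with ha hb hb
    · exact ha.symm.trans hb
    · omega
    · omega
    · exact ih (by omega) (by omega)
end
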